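/- For L ≥ 1 and ε ∈ (0,1) with εL ≥ 1, the function u on ℤ^d/(2L+1)ℤ^d whose discrete Fourier transform is û(γ) = (2⌊εL⌋+1)^{-d/2} for |γ| ≤ εL and û(γ) = 0 otherwise, satisfies ‖u‖₂ = 1, ⟨-Δ_L^P u, u⟩ ≤ Cε², and ‖u‖₄ ≥ ε^{d/4}/C for a constant C depending only on d. -/

import Mathlib

open Finset

/-- The discrete torus `ℤ^d/(2L+1)ℤ^d`, i.e. the cube `Λ_L = [-L,L]^d ∩ ℤ^d`
with periodic identification. -/
abbrev DTorus (d L : ℕ) := Fin d → ZMod (2 * L + 1)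

/-- The discrete Laplacian `-Δ` with periodic boundary conditions:
`(-Δu)(β) = Σ_{j} (2u(β) - u(β+e_j) - u(β-e_j))`. -/
noncomputable def dLap (d L : ℕ) (u : DTorus d L → ℂ) (β : DTorus d L) : ℂ :=
  ∑ j : Fin d,
    (2 * u β - u (β + fun i => if i = j then 1 else 0)
      - u (β - fun i => if i = j then 1 else 0))

/-- The discrete Dirichlet energy `⟨-Δ_L^P u, u⟩`. -/
noncomputable def dEnergy (d L : ℕ) (u : DTorus d L → ℂ) : ℝ :=
  (∑ β : DTorus d L, (starRingEnd ℂ) (u β) * dLap d L u β).re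

/-- The discrete Fourier transform
`û(γ) = (2L+1)^{-d/2} Σ_β u(β) e^{-2πi γ·β/(2L+1)}`. -/
noncomputable def dft (d L : ℕ) (u : DTorus d L → ℂ) (γ : DTorus d L) : ℂ :=
  (((2 * L + 1 : ℝ) ^ (-(d : ℝ) / 2) : ℝ) : ℂ) *
    ∑ β : DTorus d L, u β *
      Complex.exp (-2 * Real.pi * Complex.I *
        ((∑ j : Fin d, (γ j).val * (β j).val : ℕ) : ℂ) / ((2 * L + 1 : ℕ) : ℂ))

/-- The symbol of the discrete Laplacian:
`h(γ) = 2d - 2 Σ_j cos(2πγ_j/(2L+1))`. -/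
noncomputable def dSymb (d L : ℕ) (γ : DTorus d L) : ℝ :=
  2 * d - 2 * ∑ j : Fin d, Real.cos (2 * Real.pi * (γ j).val / (2 * L + 1))

/-- The absolute value `|x|` of `x ∈ ℤ/(2L+1)ℤ` for the representative in `[-L, L]`. -/
def dAbs (L : ℕ) (x : ZMod (2 * L + 1)) : ℕ := min x.val (2 * L + 1 - x.val)

lemma AddChar.map_sum {ι A M : Type*} [AddCommMonoid A] [CommMonoid M] (ψ : AddChar A M)
    (s : Finset ι) (f : ι → A) : ψ (∑ i ∈ s, f i) = ∏ i ∈ s, ψ (f i) :=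
  _root_.map_prod ψ.toMonoidHom (fun i => Multiplicative.ofAdd (f i)) s

namespace DTorus

variable {d L : ℕ}

/-- The additive character `(γ, β) ↦ e^{2πi γ·β/(2L+1)}`. -/
noncomputable def chi (γ β : DTorus d L) : ℂ :=
  ZMod.stdAddChar (∑ j, γ j * β j)

/-- The normalization `(2L+1)^{-d/2}` of the discrete Fourier transform. -/
noncomputable def normalization (d L : ℕ) : ℝ := (2 * L + 1 : ℝ) ^ (-(d : ℝ) / 2)

lemma rpow_neg_half_sq {x : ℝ} (hx : 0 < x) (d : ℕ) :
    (x ^ (-(d : ℝ) / 2)) ^ 2 = (x ^ d)⁻¹ := by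
  rw [← Real.rpow_natCast, ← Real.rpow_mul hx.le]
  rw [show -(d : ℝ) / 2 * ((2 : ℕ) : ℝ) = -(d : ℝ) by push_cast; ring, Real.rpow_neg hx.le,
    Real.rpow_natCast]

lemma normalization_sq (d L : ℕ) :
    normalization d L ^ 2 = ((2 * L + 1 : ℝ) ^ d)⁻¹ :=
  rpow_neg_half_sq (by positivity) d

lemma conj_chi (γ β : DTorus d L) : (starRingEnd ℂ) (chi γ β) = chi γ (-β) := by
  simp [chi, ← AddChar.map_neg_eq_conj]

lemma chi_add (γ β β' : DTorus d L) : chi γ (β + β') = chi γ β * chi γ β' := by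
  simp [chi, mul_add, Finset.sum_add_distrib, AddChar.map_add_eq_mul]

lemma sum_chi (β : DTorus d L) :
    ∑ γ : DTorus d L, chi γ β = if β = 0 then (2 * L + 1 : ℂ) ^ d else 0 := by
  have h : ∀ γ : DTorus d L, chi γ β = ∏ j, ZMod.stdAddChar (γ j * β j) :=
    fun γ => AddChar.map_sum _ _ _
  simp_rw [h]
  rw [← Fintype.prod_sum (fun j x => (ZMod.stdAddChar (x * β j) : ℂ))]
  simp_rw [AddChar.sum_mulShift _ (ZMod.isPrimitive_stdAddChar (2 * L + 1)), ZMod.card]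
  split_ifs with hβ
  · simp [hβ]
  · obtain ⟨j, hj⟩ := Function.ne_iff.mp hβ
    exact Finset.prod_eq_zero (Finset.mem_univ j) (by
      rw [if_neg (by simpa using hj), Nat.cast_zero])

lemma dft_eq (u : DTorus d L → ℂ) (γ : DTorus d L) :
    dft d L u γ = normalization d L * ∑ β, u β * chi γ (-β) := by
  unfold dft normalization
  congr 1
  refine Finset.sum_congr rfl fun β _ => ?_
  congr 1
  have h := ZMod.stdAddChar_coe (N := 2 * L + 1)
    (-((∑ j : Fin d, (γ j).val * (β j).val : ℕ) : ℤ))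
  have h2 : ((-((∑ j : Fin d, (γ j).val * (β j).val : ℕ) : ℤ) : ℤ) : ZMod (2 * L + 1))
      = ∑ j, γ j * (-β) j := by
    push_cast
    simp
  rw [h2] at h
  rw [chi, h]
  congr 1
  push_cast
  ring

lemma fourier_inversion (u : DTorus d L → ℂ) (β : DTorus d L) :
    u β = normalization d L * ∑ γ, dft d L u γ * chi γ β := by
  have hN : (2 * L + 1 : ℂ) ^ d ≠ 0 := pow_ne_zero _ (by exact_mod_cast (2 * L).succ_ne_zero)
  have hc : (normalization d L : ℂ) ^ 2 * (2 * L + 1 : ℂ) ^ d = 1 := by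
    have := normalization_sq d L
    rw [← Complex.ofReal_pow, this]
    push_cast
    exact inv_mul_cancel₀ hN
  have key : ∑ γ, dft d L u γ * chi γ β
      = normalization d L * ((2 * L + 1 : ℂ) ^ d * u β) := by
    simp_rw [dft_eq, mul_assoc, ← Finset.mul_sum, Finset.sum_mul, mul_assoc, ← chi_add]
    rw [Finset.sum_comm]
    simp_rw [← Finset.mul_sum, sum_chi, neg_add_eq_zero]
    simp [mul_comm]
  rw [key]
  linear_combination (-u β) * hc

lemma parseval (u v : DTorus d L → ℂ) :
    ∑ β, (starRingEnd ℂ) (u β) * v β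
      = ∑ γ, (starRingEnd ℂ) (dft d L u γ) * dft d L v γ := by
  have h : ∀ γ, (starRingEnd ℂ) (dft d L u γ)
      = normalization d L * ∑ β, (starRingEnd ℂ) (u β) * chi γ β := by
    intro γ
    simp [dft_eq, conj_chi]
  calc ∑ β, (starRingEnd ℂ) (u β) * v β
      = ∑ β, ∑ γ, (starRingEnd ℂ) (u β) * (normalization d L * (dft d L v γ * chi γ β)) := by
        refine Finset.sum_congr rfl fun β _ => ?_
        rw [fourier_inversion v β, Finset.mul_sum, Finset.mul_sum]
    _ = _ := by
        rw [Finset.sum_comm]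
        refine Finset.sum_congr rfl fun γ _ => ?_
        rw [h, Finset.mul_sum, Finset.sum_mul]
        refine Finset.sum_congr rfl fun β _ => ?_
        ring

lemma sum_norm_sq_dft (u : DTorus d L → ℂ) :
    ∑ β, ‖u β‖ ^ 2 = ∑ γ, ‖dft d L u γ‖ ^ 2 := by
  have h := parseval u u
  simp_rw [Complex.conj_mul'] at h
  exact_mod_cast h

lemma dft_translate (u : DTorus d L → ℂ) (b γ : DTorus d L) :
    dft d L (fun β => u (β + b)) γ = chi γ b * dft d L u γ := by
  have h : ∑ β, u (β + b) * chi γ (-β) = chi γ b * ∑ β, u β * chi γ (-β) := by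
    rw [← Equiv.sum_comp (Equiv.addRight b) (fun β => u β * chi γ (-β)), Finset.mul_sum]
    refine Finset.sum_congr rfl fun β _ => ?_
    rw [mul_left_comm, ← chi_add]
    simp
  rw [dft_eq, dft_eq, h, mul_left_comm]

lemma chi_eq (γ β : DTorus d L) :
    chi γ β = Complex.exp (((2 * Real.pi *
      ((∑ j, (γ j).valMinAbs * (β j).valMinAbs : ℤ) : ℝ) / (2 * L + 1) : ℝ) : ℂ) * Complex.I) := by
  have h := ZMod.stdAddChar_coe (N := 2 * L + 1) (∑ j, (γ j).valMinAbs * (β j).valMinAbs)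
  have h2 : ((∑ j, (γ j).valMinAbs * (β j).valMinAbs : ℤ) : ZMod (2 * L + 1))
      = ∑ j, γ j * β j := by
    push_cast
    simp
  rw [h2] at h
  rw [chi, h]
  congr 1
  push_cast
  ring

lemma re_chi (γ β : DTorus d L) :
    (chi γ β).re = Real.cos (2 * Real.pi *
      ((∑ j, (γ j).valMinAbs * (β j).valMinAbs : ℤ) : ℝ) / (2 * L + 1)) := by
  rw [chi_eq, Complex.exp_ofReal_mul_I_re]

/-- The cube `{|γ| ≤ m}` in the sup-norm. -/
def cube (d L m : ℕ) : Finset (DTorus d L) :=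
  Fintype.piFinset fun _ => Finset.univ.filter fun x => dAbs L x ≤ m

lemma mem_cube {m : ℕ} {γ : DTorus d L} : γ ∈ cube d L m ↔ ∀ j, dAbs L (γ j) ≤ m := by
  simp [cube]

lemma dAbs_eq (x : ZMod (2 * L + 1)) : dAbs L x = x.valMinAbs.natAbs :=
  (ZMod.valMinAbs_natAbs_eq_min x).symm

lemma card_cube {m : ℕ} (hm : m ≤ L) : (cube d L m).card = (2 * m + 1) ^ d := by
  rw [cube, Fintype.card_piFinset_const]
  congr 1
  have h : (Finset.univ.filter fun x : ZMod (2 * L + 1) => dAbs L x ≤ m).card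
      = (Finset.Icc (-m : ℤ) m).card := by
    refine Finset.card_nbij' (fun x => x.valMinAbs) (fun z => (z : ZMod (2 * L + 1))) ?_ ?_ ?_ ?_
    · intro x hx
      simp only [Finset.coe_filter, Finset.mem_univ, true_and, Set.mem_ofPred_eq, dAbs_eq] at hx
      simp only [Finset.coe_Icc, Set.mem_Icc]
      omega
    · intro z hz
      simp only [Finset.coe_Icc, Set.mem_Icc] at hz
      have : ((z : ZMod (2 * L + 1))).valMinAbs = z :=
        (ZMod.valMinAbs_spec _ _).2 ⟨rfl, by push_cast; constructor <;> omega⟩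
      simp only [Finset.coe_filter, Finset.mem_univ, true_and, Set.mem_ofPred_eq, dAbs_eq, this]
      omega
    · intro x _
      simp
    · intro z hz
      simp only [Finset.coe_Icc, Set.mem_Icc] at hz
      exact (ZMod.valMinAbs_spec _ _).2 ⟨rfl, by push_cast; constructor <;> omega⟩
  rw [h, Int.card_Icc]
  omega

lemma dft_dLap (u : DTorus d L → ℂ) (γ : DTorus d L) :
    dft d L (dLap d L u) γ =
      ((∑ j, (2 - 2 * (chi γ fun i => if i = j then 1 else 0).re) : ℝ) : ℂ) * dft d L u γ := by
  have hlin : dft d L (dLap d L u) γ = ∑ j : Fin d,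
      (2 * dft d L u γ - dft d L (fun β => u (β + fun i => if i = j then 1 else 0)) γ
        - dft d L (fun β => u (β + -fun i => if i = j then 1 else 0)) γ) := by
    simp_rw [dft_eq, dLap, Finset.sum_mul, ← sub_eq_add_neg]
    rw [Finset.sum_comm, Finset.mul_sum]
    refine Finset.sum_congr rfl fun j _ => ?_
    simp only [Finset.mul_sum, ← Finset.sum_sub_distrib]
    refine Finset.sum_congr rfl fun β _ => ?_
    ring
  rw [hlin]
  push_cast
  rw [Finset.sum_mul]
  refine Finset.sum_congr rfl fun j _ => ?_
  rw [dft_translate, dft_translate, ← conj_chi]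
  have := Complex.add_conj (chi γ fun i => if i = j then 1 else 0)
  push_cast at this
  linear_combination (-dft d L u γ) * this

lemma dEnergy_eq (u : DTorus d L → ℂ) :
    dEnergy d L u = ∑ γ,
      (∑ j, (2 - 2 * (chi γ fun i => if i = j then 1 else 0).re)) * ‖dft d L u γ‖ ^ 2 := by
  have h : ∑ β, (starRingEnd ℂ) (u β) * dLap d L u β = ((∑ γ,
      (∑ j, (2 - 2 * (chi γ fun i => if i = j then 1 else 0).re)) * ‖dft d L u γ‖ ^ 2 : ℝ) : ℂ) := by
    rw [parseval, Complex.ofReal_sum]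
    refine Finset.sum_congr rfl fun γ _ => ?_
    rw [dft_dLap, mul_left_comm, Complex.conj_mul']
    push_cast
    ring
  rw [dEnergy, h, Complex.ofReal_re]

lemma chi_single_re (γ : DTorus d L) (j : Fin d) :
    (chi γ fun i => if i = j then 1 else 0).re
      = Real.cos (2 * Real.pi * (γ j).valMinAbs / (2 * L + 1)) := by
  have h := ZMod.stdAddChar_coe (N := 2 * L + 1) (γ j).valMinAbs
  have h2 : (chi γ fun i => if i = j then 1 else 0) = ZMod.stdAddChar (γ j) := by simp [chi]
  rw [ZMod.coe_valMinAbs] at h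
  rw [h2, h, ← Complex.exp_ofReal_mul_I_re]
  congr 2
  push_cast
  ring

lemma two_sub_two_mul_re_chi_le {m : ℕ} {ε : ℝ} (hm : (m : ℝ) ≤ ε * L) (hε : 0 ≤ ε)
    {γ : DTorus d L} (hγ : γ ∈ cube d L m) (j : Fin d) :
    2 - 2 * (chi γ fun i => if i = j then 1 else 0).re ≤ 10 * ε ^ 2 := by
  have hN : (0 : ℝ) < 2 * L + 1 := by positivity
  have hk : |((γ j).valMinAbs : ℝ)| ≤ m := by
    have := mem_cube.1 hγ j
    rw [dAbs_eq] at this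
    rw [← Int.cast_abs, Int.abs_eq_natAbs]
    exact_mod_cast this
  have hx : |2 * Real.pi * (γ j).valMinAbs / (2 * L + 1)| ≤ Real.pi * ε := by
    rw [abs_div, abs_mul, abs_of_pos Real.two_pi_pos, abs_of_pos hN, div_le_iff₀ hN]
    nlinarith [Real.pi_pos, mul_nonneg Real.pi_pos.le hε,
      mul_le_mul_of_nonneg_left (hk.trans hm) Real.pi_pos.le]
  have hsq := sq_le_sq' (abs_le.1 hx).1 (abs_le.1 hx).2
  have hpi : Real.pi ^ 2 ≤ 10 := by nlinarith [Real.pi_lt_d2, Real.pi_pos]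
  have hcos := Real.one_sub_sq_div_two_le_cos (x := 2 * Real.pi * (γ j).valMinAbs / (2 * L + 1))
  rw [chi_single_re]
  nlinarith [mul_le_mul_of_nonneg_right hpi (sq_nonneg ε)]

lemma half_le_re_chi {m r : ℕ} (h : 8 * (d * m) * r ≤ 2 * L + 1) {γ β : DTorus d L}
    (hγ : γ ∈ cube d L m) (hβ : β ∈ cube d L r) : 1 / 2 ≤ (chi γ β).re := by
  have hN : (0 : ℝ) < 2 * L + 1 := by positivity
  have hz : |∑ j, (γ j).valMinAbs * (β j).valMinAbs| ≤ ((d * m * r : ℕ) : ℤ) := by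
    refine (Finset.abs_sum_le_sum_abs _ _).trans ?_
    refine (Finset.sum_le_card_nsmul _ _ ((m * r : ℕ) : ℤ) fun j _ => ?_).trans ?_
    · have h1 := mem_cube.1 hγ j
      have h2 := mem_cube.1 hβ j
      rw [dAbs_eq] at h1 h2
      rw [Int.abs_eq_natAbs, Int.natAbs_mul]
      exact_mod_cast Nat.mul_le_mul h1 h2
    · simp [mul_assoc]
  have hz' : |((∑ j, (γ j).valMinAbs * (β j).valMinAbs : ℤ) : ℝ)| ≤ ((d * m * r : ℕ) : ℝ) := by
    rw [← Int.cast_abs]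
    exact_mod_cast hz
  have h' : 8 * ((d * m * r : ℕ) : ℝ) ≤ 2 * L + 1 := by
    have : 8 * (d * m * r) ≤ 2 * L + 1 := by linarith
    exact_mod_cast this
  rw [re_chi]
  set z : ℝ := ((∑ j, (γ j).valMinAbs * (β j).valMinAbs : ℤ) : ℝ)
  have hx : |2 * Real.pi * z / (2 * L + 1)| ≤ 1 := by
    rw [abs_div, abs_mul, abs_of_pos Real.two_pi_pos, abs_of_pos hN, div_le_one hN]
    nlinarith [Real.pi_pos, Real.pi_lt_four, abs_nonneg z]
  have hsq := sq_le_sq' (abs_le.1 hx).1 (abs_le.1 hx).2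
  have hcos := Real.one_sub_sq_div_two_le_cos (x := 2 * Real.pi * z / (2 * L + 1))
  linarith

lemma norm_ge_of_dft_eq_indicator {m r : ℕ} (h : 8 * (d * m) * r ≤ 2 * L + 1) (hm : m ≤ L)
    {a : ℝ} (ha : 0 ≤ a) {u : DTorus d L → ℂ}
    (hu : ∀ γ, dft d L u γ = if γ ∈ cube d L m then (a : ℂ) else 0)
    {β : DTorus d L} (hβ : β ∈ cube d L r) :
    normalization d L * (a * (2 * m + 1) ^ d / 2) ≤ ‖u β‖ := by
  have hc : 0 ≤ normalization d L := Real.rpow_nonneg (by positivity) _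
  have hval : u β = normalization d L * (a * ∑ γ ∈ cube d L m, chi γ β) := by
    rw [fourier_inversion u β]
    simp_rw [hu, ite_mul, zero_mul]
    rw [← Finset.sum_filter, Finset.filter_mem_eq_inter, Finset.univ_inter, ← Finset.mul_sum]
  have hre : (u β).re = normalization d L * (a * ∑ γ ∈ cube d L m, (chi γ β).re) := by
    rw [hval, Complex.re_ofReal_mul, Complex.re_ofReal_mul, Complex.re_sum]
  have hsum : ((2 * m + 1) ^ d / 2 : ℝ) ≤ ∑ γ ∈ cube d L m, (chi γ β).re := by
    have := Finset.card_nsmul_le_sum (cube d L m) (fun γ => (chi γ β).re) (1 / 2)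
      fun γ hγ => half_le_re_chi h hγ hβ
    rw [card_cube hm, nsmul_eq_mul] at this
    push_cast at this
    linarith
  refine le_trans ?_ (Complex.re_le_norm _)
  rw [hre, mul_div_assoc]
  gcongr

end DTorus

/-- the trial function whose Fourier transform is the normalized
indicator of the ball `{|γ| ≤ εL}`, i.e. `û(γ) = (2⌊εL⌋+1)^{-d/2}` for `|γ| ≤ εL`
and `0` otherwise, satisfies `‖u‖₂ = 1`, `⟨-Δ_L^P u, u⟩ ≤ Cε²` and
`‖u‖₄ ≥ ε^{d/4}/C`, with `C = C(d)`. -/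
theorem trial_function_fourier_ball (d : ℕ) (hd : 1 ≤ d) :
    ∃ C > (0:ℝ), ∀ (ε : ℝ) (L : ℕ), 0 < ε → ε < 1 → 1 ≤ ε * L →
      ∀ u : DTorus d L → ℂ,
        (∀ γ : DTorus d L,
          dft d L u γ = if (∀ j, (dAbs L (γ j) : ℝ) ≤ ε * L)
            then (((2 * ⌊ε * L⌋₊ + 1 : ℝ) ^ (-(d : ℝ) / 2) : ℝ) : ℂ) else 0) →
        (∑ β, ‖u β‖ ^ 2) = 1 ∧
        dEnergy d L u ≤ C * ε ^ 2 ∧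
        ε ^ ((d : ℝ) / 4) / C ≤ (∑ β, ‖u β‖ ^ 4) ^ ((1:ℝ)/4) := by
  have hd' : (1 : ℝ) ≤ d := by exact_mod_cast hd
  refine ⟨16 * (24 * d) ^ d + 10 * d, by positivity, ?_⟩
  intro ε L hε hε1 hεL u hu
  set m := ⌊ε * L⌋₊ with hm_def
  set a : ℝ := (2 * (m : ℝ) + 1) ^ (-(d : ℝ) / 2) with ha_def
  have hL : (0 : ℝ) ≤ L := by positivity
  have hL1 : (1 : ℝ) ≤ L := by nlinarith
  have hmε : (m : ℝ) ≤ ε * L := Nat.floor_le (by positivity)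
  have hεm : ε * L < m + 1 := Nat.lt_floor_add_one _
  have hm1 : 1 ≤ m := Nat.le_floor (by simpa using hεL)
  have hmL : m ≤ L := by
    have : (m : ℝ) ≤ L := by nlinarith
    exact_mod_cast this
  have ha : 0 ≤ a := Real.rpow_nonneg (by positivity) _
  have hM : (0 : ℝ) < (2 * m + 1) ^ d := by positivity
  have ha2 : a ^ 2 = ((2 * m + 1 : ℝ) ^ d)⁻¹ := DTorus.rpow_neg_half_sq (by positivity) d
  have hu' : ∀ γ, dft d L u γ = if γ ∈ DTorus.cube d L m then (a : ℂ) else 0 := by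
    intro γ
    rw [hu γ]
    refine if_congr ?_ rfl rfl
    simp_rw [DTorus.mem_cube, hm_def, Nat.le_floor_iff (show 0 ≤ ε * L by positivity)]
  have hnorm : ∑ γ, ‖dft d L u γ‖ ^ 2 = 1 := by
    have : ∀ γ, ‖dft d L u γ‖ ^ 2 = if γ ∈ DTorus.cube d L m then a ^ 2 else 0 := by
      intro γ
      rw [hu' γ]
      split_ifs <;> simp
    simp_rw [this]
    rw [← Finset.sum_filter, Finset.filter_mem_eq_inter, Finset.univ_inter, Finset.sum_const,
      DTorus.card_cube hmL, nsmul_eq_mul, ha2]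
    push_cast
    exact mul_inv_cancel₀ hM.ne'
  refine ⟨(DTorus.sum_norm_sq_dft u).trans hnorm, ?_, ?_⟩
  · have hle : dEnergy d L u ≤ ∑ γ, (10 * d * ε ^ 2) * ‖dft d L u γ‖ ^ 2 := by
      rw [DTorus.dEnergy_eq]
      refine Finset.sum_le_sum fun γ _ => ?_
      by_cases hγ : γ ∈ DTorus.cube d L m
      · refine mul_le_mul_of_nonneg_right ?_ (sq_nonneg _)
        refine (Finset.sum_le_card_nsmul _ _ (10 * ε ^ 2) fun j _ =>
          DTorus.two_sub_two_mul_re_chi_le hmε hε.le hγ j).trans (le_of_eq ?_)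
        simp
        ring
      · simp [hu' γ, hγ]
    rw [← Finset.mul_sum, hnorm, mul_one] at hle
    refine hle.trans ?_
    gcongr
    exact le_add_of_nonneg_left (by positivity)
  · set r := (2 * L + 1) / (8 * (d * m)) with hr_def
    have hdm : 1 ≤ d * m := Nat.mul_pos hd hm1
    have hr : 8 * (d * m) * r ≤ 2 * L + 1 := Nat.mul_div_le _ _
    have hr' : 2 * L + 1 ≤ 8 * (d * m) * (2 * r + 1) := by
      have := Nat.lt_mul_div_succ (2 * L + 1) (show 0 < 8 * (d * m) by omega)
      rw [← hr_def] at this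
      refine this.le.trans (Nat.mul_le_mul_left _ (by omega))
    have hL1' : 1 ≤ L := by exact_mod_cast hL1
    have hrL : r ≤ L := by nlinarith
    set c := DTorus.normalization d L with hc_def
    have hc : 0 ≤ c := Real.rpow_nonneg (by positivity) _
    have hc2 : c ^ 2 = ((2 * L + 1 : ℝ) ^ d)⁻¹ := DTorus.normalization_sq d L
    have hN : (0 : ℝ) < (2 * L + 1) ^ d := by positivity
    have hsum : (2 * r + 1 : ℝ) ^ d * (c * (a * (2 * m + 1) ^ d / 2)) ^ 4 ≤ ∑ β, ‖u β‖ ^ 4 := by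
      have h1 : ∑ β ∈ DTorus.cube d L r, ‖u β‖ ^ 4 ≤ ∑ β, ‖u β‖ ^ 4 :=
        Finset.sum_le_sum_of_subset_of_nonneg (Finset.subset_univ _) fun _ _ _ => by positivity
      have h2 := Finset.card_nsmul_le_sum (DTorus.cube d L r) (fun β => ‖u β‖ ^ 4)
        ((c * (a * (2 * m + 1) ^ d / 2)) ^ 4) fun β hβ =>
          pow_le_pow_left₀ (by positivity) (DTorus.norm_ge_of_dft_eq_indicator hr hmL ha hu' hβ) 4
      rw [DTorus.card_cube hrL, nsmul_eq_mul] at h2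
      push_cast at h2
      exact h2.trans h1
    have heq : (2 * r + 1 : ℝ) ^ d * (c * (a * (2 * m + 1) ^ d / 2)) ^ 4
        = ((2 * r + 1) * (2 * m + 1) ^ 1 * ((2 * m + 1) ^ 1 / (2 * L + 1) ^ 2)) ^ d *
          ((2 * m + 1) ^ d * a ^ 2) ^ 2 / 16 := by
      rw [show (c * (a * (2 * m + 1 : ℝ) ^ d / 2)) ^ 4
        = (c ^ 2) ^ 2 * (a ^ 2) ^ 2 * ((2 * m + 1) ^ d) ^ 4 / 16 by ring, hc2]
      rw [mul_pow, mul_pow, div_pow, pow_one, ← pow_mul (2 * (L : ℝ) + 1), mul_comm 2 d, pow_mul]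
      field_simp
    rw [heq, ha2, mul_inv_cancel₀ hM.ne', one_pow, mul_one, pow_one] at hsum
    have hbase : ε / (24 * d) ≤ (2 * r + 1) * (2 * m + 1) * ((2 * m + 1) / (2 * L + 1) ^ 2) := by
      have hr'' : (2 * L + 1 : ℝ) ≤ 8 * (d * m) * (2 * r + 1) := by exact_mod_cast hr'
      have hm1' : (1 : ℝ) ≤ m := by exact_mod_cast hm1
      have e1 : (2 * L + 1 : ℝ) ≤ 8 * d * ((2 * r + 1) * (2 * m + 1)) := by
        have : (0 : ℝ) ≤ 8 * d * (2 * r + 1) * (m + 1) := by positivity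
        linarith
      have e2 : ε * (2 * L + 1) ≤ 3 * (2 * m + 1) := by nlinarith
      rw [← mul_div_assoc, div_le_div_iff₀ (by positivity) (by positivity)]
      have := mul_le_mul e2 e1 (by positivity) (by positivity)
      linarith
    have hpow : ε ^ d / (16 * (24 * d) ^ d) ≤ ∑ β, ‖u β‖ ^ 4 := by
      refine le_trans (le_of_eq ?_) ((div_le_div_of_nonneg_right
        (pow_le_pow_left₀ (by positivity) hbase d) (by norm_num)).trans hsum)
      rw [div_pow, div_div, mul_comm (16 : ℝ)]
    set C : ℝ := 16 * (24 * d) ^ d + 10 * d with hC_def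
    have hCpos : 0 < C := by positivity
    have hC1 : 1 ≤ C := by
      have : (0 : ℝ) ≤ 16 * (24 * d) ^ d := by positivity
      linarith
    have hC4 : 16 * (24 * d : ℝ) ^ d ≤ C ^ 4 :=
      (le_add_of_nonneg_right (by positivity)).trans (le_self_pow₀ hC1 (by norm_num))
    have hroot : ε ^ ((d : ℝ) / 4) / C = (ε ^ d / C ^ 4) ^ ((1 : ℝ) / 4) := by
      rw [Real.div_rpow (by positivity) (by positivity), ← Real.rpow_natCast ε,
        ← Real.rpow_mul hε.le, ← Real.rpow_natCast C, ← Real.rpow_mul hCpos.le]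
      norm_num
      ring_nf
    rw [hroot]
    refine Real.rpow_le_rpow (by positivity) (le_trans ?_ hpow) (by norm_num)
    gcongr
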